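/- Let G be a numeration system with coefficients a_0 ≥ a_1 ≥ … ≥ a_{d−1} ≥ 1, irreducible characteristic polynomial and Pisot characteristic root β. For every cylinder set Z_j of length at most j, the measure satisfies μ(Z_j) ≥ β^{d−1} / (β^j (β^{d−1} + β^{d−2} + … + 1)). In particular, for a cylinder Z of length K the quantities F_{K,j} − a_0 F_{K,j−1} − … − a_{j−1} F_{K,0} are nonnegative for 0 ≤ j ≤ d. -/

import Mathlib

open scoped BigOperators
open scoped Classical

/-- A numeration system `G = (G_n)` defined by a linear recurrence with
nonincreasing positive coefficients `a_0 ≥ a_1 ≥ … ≥ a_{d-1} ≥ 1`, together with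
the regular (greedy) digit expansion `dig n k = ε_k(n)` of every nonnegative integer. -/
structure NumerationSystem where
  d : ℕ
  hd : 1 ≤ d
  a : ℕ → ℕ
  ha_anti : ∀ i j, i ≤ j → j < d → a j ≤ a i
  ha_pos : ∀ i, i < d → 1 ≤ a i
  G : ℕ → ℕ
  hG0 : G 0 = 1
  hG_small : ∀ k, 0 < k → k < d → G k = (∑ i ∈ Finset.range k, a i * G (k - 1 - i)) + 1
  hG_rec : ∀ n : ℕ, G (n + d) = ∑ i ∈ Finset.range d, a i * G (n + d - 1 - i)
  dig : ℕ → ℕ → ℕ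
  hdig_fin : ∀ n : ℕ, ∃ K, (∀ k, K ≤ k → dig n k = 0) ∧ n = ∑ k ∈ Finset.range K, dig n k * G k
  hdig_reg : ∀ n K, ∑ k ∈ Finset.range K, dig n k * G k < G K

namespace NumerationSystem

/-- The characteristic polynomial `X^d - a_0 X^{d-1} - … - a_{d-1}` of the numeration system. -/
noncomputable def charPoly (S : NumerationSystem) : Polynomial ℤ :=
  Polynomial.X ^ S.d -
    ∑ i ∈ Finset.range S.d, Polynomial.C (S.a i : ℤ) * Polynomial.X ^ (S.d - 1 - i)

/-- `β` is the characteristic root of `S`: the characteristic polynomial is irreducible,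
`β` is a root, `β > 1`, and every other complex root has modulus `< 1` (so `β` is Pisot). -/
def IsCharRoot (S : NumerationSystem) (β : ℝ) : Prop :=
  Irreducible (S.charPoly.map (Int.castRingHom ℚ)) ∧
  (Polynomial.aeval β) S.charPoly = 0 ∧ 1 < β ∧
  ∀ z : ℂ, (Polynomial.aeval z) S.charPoly = 0 → z ≠ (β : ℂ) → ‖z‖ < 1

/-- `F_{K,r}` : the number of `n < G (K+r)` whose regular expansion starts with the word `w`. -/
noncomputable def F (S : NumerationSystem) (w : ℕ → ℕ) (K r : ℕ) : ℕ :=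
  ((Finset.range (S.G (K + r))).filter (fun n => ∀ i, i < K → S.dig n i = w i)).card

/-- The measure `μ` of the cylinder set given by the word `w` of length `K`. -/
noncomputable def mu (S : NumerationSystem) (β : ℝ) (w : ℕ → ℕ) (K : ℕ) : ℝ :=
  (∑ j ∈ Finset.range S.d,
      ((S.F w K j : ℝ) - ∑ i ∈ Finset.range j, (S.a i : ℝ) * (S.F w K (j - 1 - i) : ℝ))
        * β ^ (S.d - 1 - j)) /
    (β ^ K * ∑ i ∈ Finset.range S.d, β ^ i)

/-- The extended `β`-adic Monna map on digit sequences: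
`ψ_β(x) = ∑_{k ≥ 0} ∑_{i < x_k} μ(Z(x_0,…,x_{k-1},i))`. -/
noncomputable def psiSeq (S : NumerationSystem) (β : ℝ) (x : ℕ → ℕ) : ℝ :=
  ∑' k : ℕ, ∑ i ∈ Finset.range (x k), S.mu β (fun m => if m < k then x m else i) (k + 1)

/-- The extended `β`-adic Monna map on integers (via the regular `G`-expansion). -/
noncomputable def psi (S : NumerationSystem) (β : ℝ) (n : ℕ) : ℝ :=
  S.psiSeq β (S.dig n)

/-- A digit sequence is regular if all its partial sums satisfy the greedy condition. -/
def RegularSeq (S : NumerationSystem) (x : ℕ → ℕ) : Prop :=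
  ∀ K, ∑ k ∈ Finset.range K, x k * S.G k < S.G K

/-- A finite word of length `K` is a regular digit string. -/
def RegularWord (S : NumerationSystem) (w : ℕ → ℕ) (K : ℕ) : Prop :=
  ∀ K', K' ≤ K → ∑ k ∈ Finset.range K', w k * S.G k < S.G K'

/-- The Galois closure `K = ℚ(β_1,…,β_d)` of `ℚ(β)`, realized inside `ℂ` as the field
generated by all roots of the characteristic polynomial. -/
noncomputable def galoisClosure (S : NumerationSystem) : IntermediateField ℚ ℂ :=
  IntermediateField.adjoin ℚ {z : ℂ | (Polynomial.aeval z) S.charPoly = 0}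

/-- `k` is maximal with `a_0 = a_1 = … = a_k`. -/
def IsPlateau (S : NumerationSystem) (k : ℕ) : Prop :=
  k < S.d ∧ (∀ i, i ≤ k → S.a i = S.a 0) ∧ (k + 1 < S.d → S.a (k + 1) ≠ S.a 0)

/-- `βc 0, …, βc (d-1)` enumerate the (distinct) roots of the characteristic polynomial and
`b` gives the coefficients in the explicit formula `G_n = ∑_j b_j β_j^n`. -/
def IsRootData (S : NumerationSystem) (βc b : ℕ → ℂ) : Prop :=
  (∀ j, j < S.d → (Polynomial.aeval (βc j)) S.charPoly = 0) ∧
  (∀ j j', j < S.d → j' < S.d → βc j = βc j' → j = j') ∧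
  ∀ n : ℕ, (S.G n : ℂ) = ∑ j ∈ Finset.range S.d, b j * βc j ^ n

end NumerationSystem

/-- The maximal digit pattern: `ε_i = a_0` if `(k+1) ∤ i` or `i = 0`, and `ε_i = a_0 - 1`
otherwise. -/
def maxPattern (a0 k i : ℕ) : ℕ :=
  if (k + 1) ∣ i ∧ i ≠ 0 then a0 - 1 else a0

/-- The constant `A = 1 + ∑_j a_0 b_j/(1-β_j) - ∑_j b_j/(1-β_j^{k+1})` from the corner
analysis (for a corner coordinate equal to 1). -/
noncomputable def cornerA (S : NumerationSystem) (βc b : ℕ → ℂ) (k : ℕ) : ℂ :=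
  1 + ∑ j ∈ Finset.range S.d, (S.a 0 : ℂ) * b j / (1 - βc j)
    - ∑ j ∈ Finset.range S.d, b j / (1 - βc j ^ (k + 1))

/-- The coefficient `c_j^{(i)} = ∑_{m ≥ 0} b_j ε_{n_0+m}(N) β_j^m` (corner coordinate 0). -/
noncomputable def cornerC0 (S : NumerationSystem) (βc b : ℕ → ℂ) (N n0 j : ℕ) : ℂ :=
  ∑' m : ℕ, (S.dig N (n0 + m) : ℂ) * b j * βc j ^ m

/-- The coefficient `c_j^{(i)}` for a corner coordinate equal to 1. -/
noncomputable def cornerC1 (S : NumerationSystem) (βc b : ℕ → ℂ) (k N n1 j : ℕ) : ℂ :=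
  cornerC0 S βc b N n1 j - (S.a 0 : ℂ) * b j / (1 - βc j)
    + b j * βc j ^ ((n1 + k) / (k + 1) * (k + 1) - n1) / (1 - βc j ^ (k + 1))

/-- Lexicographic comparison of words of length `n`, reading the highest digit first:
`w <_lex w'` iff they differ at some position `m` with `w m < w' m` and agree above `m`. -/
def LexLtBelow (n : ℕ) (w w' : ℕ → ℕ) : Prop :=
  ∃ m, m < n ∧ w m < w' m ∧ ∀ j, m < j → j < n → w j = w' j

/-- The exponent `H` of the corner avoidance theorem. -/
noncomputable def cornerH {s : ℕ} (h : Fin s → ℕ) : ℕ :=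
  if ∀ i, h i = 0 then 2 else if ∀ i, h i = 1 then s else 1 + ∑ i, h i

/-- A sequence `(x_n)_{n>0}` in `[0,1)^s` is uniformly distributed modulo 1. -/
def IsUniformlyDistributed {s : ℕ} (x : ℕ → Fin s → ℝ) : Prop :=
  ∀ a b : Fin s → ℝ, (∀ i, 0 ≤ a i) → (∀ i, a i ≤ b i) → (∀ i, b i ≤ 1) →
    Filter.Tendsto
      (fun N : ℕ =>
        (((Finset.Icc 1 N).filter fun n => ∀ i, a i ≤ x n i ∧ x n i < b i).card : ℝ) / (N : ℝ))
      Filter.atTop (nhds (∏ i, (b i - a i)))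

namespace NumerationSystem

lemma aux_bound (S : NumerationSystem) (t M : ℕ) (htd : t ≤ S.d) (htM : t ≤ M) :
    ∑ i ∈ Finset.range t, S.a i * S.G (M - 1 - i) ≤ S.G M := by
  by_cases h : M < S.d
  · rcases Nat.eq_zero_or_pos M with h0 | h0
    · subst h0
      have : t = 0 := by omega
      subst this
      simp
    · rw [S.hG_small M h0 h]
      exact le_trans (Finset.sum_le_sum_of_subset (Finset.range_mono htM)) (Nat.le_succ _)
  · obtain ⟨n, rfl⟩ : ∃ n, M = n + S.d := ⟨M - S.d, by omega⟩
    rw [S.hG_rec n]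
    exact Finset.sum_le_sum_of_subset (Finset.range_mono htd)

lemma aux_bound_shift (S : NumerationSystem) (s t M : ℕ) (htd : s + t ≤ S.d) (htM : t ≤ M) :
    ∑ i ∈ Finset.range t, S.a (s + i) * S.G (M - 1 - i) ≤ S.G M := by
  refine le_trans (Finset.sum_le_sum fun i hi => ?_) (S.aux_bound t M (by omega) htM)
  have := Finset.mem_range.1 hi
  exact Nat.mul_le_mul_right _ (S.ha_anti i (s + i) (by omega) (by omega))

lemma aux_mono (S : NumerationSystem) : Monotone S.G := by
  apply monotone_nat_of_le_succ
  intro n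
  have h := S.aux_bound 1 (n + 1) S.hd (by omega)
  simp at h
  have := S.ha_pos 0 S.hd
  nlinarith

lemma aux_div (g r r' x y : ℕ) (hr : r < g) (hr' : r' < g) (h : r + x * g = r' + y * g) :
    x = y := by
  have h1 : (r + x * g) / g = x := by
    rw [Nat.add_mul_div_right _ _ (by omega), Nat.div_eq_of_lt hr, zero_add]
  have h2 : (r' + y * g) / g = y := by
    rw [Nat.add_mul_div_right _ _ (by omega), Nat.div_eq_of_lt hr', zero_add]
  rw [← h1, h, h2]

lemma aux_unique (S : NumerationSystem) (K : ℕ) (x y : ℕ → ℕ) (hx : S.RegularWord x K)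
    (hy : S.RegularWord y K)
    (h : ∑ k ∈ Finset.range K, x k * S.G k = ∑ k ∈ Finset.range K, y k * S.G k) :
    ∀ i, i < K → x i = y i := by
  induction K with
  | zero => intro i hi; omega
  | succ K ih =>
    rw [Finset.sum_range_succ, Finset.sum_range_succ] at h
    have h1 := hx K (by omega)
    have h2 := hy K (by omega)
    have hK : x K = y K := aux_div _ _ _ _ _ h1 h2 h
    rw [hK] at h
    intro i hi
    rcases Nat.lt_succ_iff_lt_or_eq.1 hi with h3 | h3
    · exact ih (fun K' hK' => hx K' (by omega)) (fun K' hK' => hy K' (by omega)) (by omega) i h3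
    · rw [h3, hK]

lemma aux_exp (S : NumerationSystem) (n L : ℕ) (hn : n < S.G L) :
    n = ∑ k ∈ Finset.range L, S.dig n k * S.G k := by
  obtain ⟨N, h0, h1⟩ := S.hdig_fin n
  have hz : ∀ k, L ≤ k → S.dig n k = 0 := by
    intro k hk
    by_contra hne
    have hkN : k < N := by
      by_contra hc
      exact hne (h0 k (by omega))
    have h2 : S.dig n k * S.G k ≤ n := by
      conv_rhs => rw [h1]
      exact Finset.single_le_sum (f := fun k => S.dig n k * S.G k) (fun _ _ => Nat.zero_le _)
        (Finset.mem_range.2 hkN)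
    have h3 := S.aux_mono hk
    have h4 : 1 ≤ S.dig n k := Nat.one_le_iff_ne_zero.2 hne
    nlinarith
  have e1 : ∑ k ∈ Finset.range N, S.dig n k * S.G k
      = ∑ k ∈ Finset.range (max N L), S.dig n k * S.G k := by
    apply Finset.sum_subset (Finset.range_mono (le_max_left _ _))
    intro k _ hk
    rw [h0 k (by simpa using hk), zero_mul]
  have e2 : ∑ k ∈ Finset.range L, S.dig n k * S.G k
      = ∑ k ∈ Finset.range (max N L), S.dig n k * S.G k := by
    apply Finset.sum_subset (Finset.range_mono (le_max_right _ _))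
    intro k _ hk
    rw [hz k (by simpa using hk), zero_mul]
  rw [e2, ← e1]
  exact h1

lemma aux_dig_add (S : NumerationSystem) (c n L : ℕ) (hn : n < S.G L)
    (hc : c * S.G L + n < S.G (L + 1)) : ∀ i, i < L → S.dig (c * S.G L + n) i = S.dig n i := by
  have h := S.aux_exp _ _ hc
  generalize hm : c * S.G L + n = m at *
  rw [Finset.sum_range_succ] at h
  have hr := S.hdig_reg m L
  have hcd : S.dig m L = c := aux_div _ _ _ _ _ hr hn (by omega)
  rw [hcd] at h
  have hn' := S.aux_exp n L hn
  exact S.aux_unique L _ _ (fun K' _ => S.hdig_reg m K') (fun K' _ => S.hdig_reg n K') (by omega)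

lemma aux_F (S : NumerationSystem) (w : ℕ → ℕ) (K r : ℕ) :
    S.F w K r = Nat.count (fun n => ∀ i, i < K → S.dig n i = w i) (S.G (K + r)) := by
  rw [F, Nat.count_eq_card_filter_range]

lemma aux_count_congr (p q : ℕ → Prop) [DecidablePred p] [DecidablePred q] (n : ℕ)
    (h : ∀ i, i < n → (p i ↔ q i)) :
    Nat.count p n = Nat.count q n := by
  rw [Nat.count_eq_card_filter_range, Nat.count_eq_card_filter_range]
  congr 1
  apply Finset.filter_congr
  intro i hi
  exact h i (Finset.mem_range.1 hi)

lemma aux_count_add (S : NumerationSystem) (w : ℕ → ℕ) (K L : ℕ) (hKL : K ≤ L) (c x : ℕ)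
    (hx : x ≤ S.G L) (hc : c * S.G L + x ≤ S.G (L + 1)) :
    Nat.count (fun n => ∀ i, i < K → S.dig n i = w i) (c * S.G L + x)
      = c * Nat.count (fun n => ∀ i, i < K → S.dig n i = w i) (S.G L)
        + Nat.count (fun n => ∀ i, i < K → S.dig n i = w i) x := by
  have key : ∀ c x, x ≤ S.G L → c * S.G L + x ≤ S.G (L + 1) →
      Nat.count (fun n => ∀ i, i < K → S.dig n i = w i) (c * S.G L + x)
      = Nat.count (fun n => ∀ i, i < K → S.dig n i = w i) (c * S.G L)
        + Nat.count (fun n => ∀ i, i < K → S.dig n i = w i) x := by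
    intro c x hx hc
    rw [Nat.count_add]
    congr 1
    apply aux_count_congr
    intro n hn
    refine forall_congr' fun i => forall_congr' fun hi => ?_
    rw [S.aux_dig_add c n L (by omega) (by omega) i (by omega)]
  rw [key c x hx hc]
  congr 1
  have hc' : c * S.G L ≤ S.G (L + 1) := by omega
  clear hc
  induction c with
  | zero => simp
  | succ c ih =>
    rw [Nat.succ_mul] at hc' ⊢
    rw [key c _ le_rfl hc', ih (by omega), Nat.succ_mul]

lemma aux_count_sum (S : NumerationSystem) (w : ℕ → ℕ) (K t : ℕ) : ∀ s M : ℕ, s + t ≤ S.d →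
    K + t ≤ M →
    Nat.count (fun n => ∀ i, i < K → S.dig n i = w i)
        (∑ i ∈ Finset.range t, S.a (s + i) * S.G (M - 1 - i))
      = ∑ i ∈ Finset.range t, S.a (s + i) *
        Nat.count (fun n => ∀ i, i < K → S.dig n i = w i) (S.G (M - 1 - i)) := by
  induction t with
  | zero => intros; simp
  | succ t ih =>
    intro s M hs hM
    obtain ⟨L, rfl⟩ : ∃ L, M = L + 1 := ⟨M - 1, by omega⟩
    have hb := S.aux_bound_shift s (t + 1) (L + 1) hs (by omega)
    have hb' := S.aux_bound_shift (s + 1) t L (by omega) (by omega)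
    have ih' := ih (s + 1) L (by omega) (by omega)
    rw [Finset.sum_range_succ', add_comm] at hb ⊢
    rw [Finset.sum_range_succ', add_comm (∑ i ∈ Finset.range t, _)]
    have e : ∀ i, L - 1 - i = L - (i + 1) := fun i => by omega
    have e' : ∀ i, s + 1 + i = s + (i + 1) := fun i => by omega
    simp only [e, e'] at hb' ih'
    simp only [add_zero, Nat.sub_zero, Nat.add_sub_cancel] at hb ⊢
    rw [S.aux_count_add w K L (by omega) _ _ hb' hb, ih']

lemma aux_F_ge (S : NumerationSystem) (w : ℕ → ℕ) (K j : ℕ) (hj : j ≤ S.d) :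
    ∑ i ∈ Finset.range j, S.a i * S.F w K (j - 1 - i) ≤ S.F w K j := by
  have h := S.aux_count_sum w K j 0 (K + j) (by omega) le_rfl
  have hb := S.aux_bound j (K + j) hj (by omega)
  simp only [zero_add] at h
  rw [S.aux_F w K j]
  refine le_trans (le_of_eq ?_) (Nat.count_monotone _ hb)
  rw [h]
  apply Finset.sum_congr rfl
  intro i hi
  have := Finset.mem_range.1 hi
  rw [S.aux_F, show K + (j - 1 - i) = K + j - 1 - i by omega]

lemma aux_F_zero (S : NumerationSystem) (w : ℕ → ℕ) (K : ℕ) (hw : S.RegularWord w K) :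
    1 ≤ S.F w K 0 := by
  rw [F, Nat.succ_le_iff, Finset.card_pos]
  have hn := hw K le_rfl
  refine ⟨∑ k ∈ Finset.range K, w k * S.G k, ?_⟩
  rw [Finset.mem_filter, Finset.mem_range]
  refine ⟨hn, ?_⟩
  exact S.aux_unique K _ _ (fun K' _ => S.hdig_reg _ K') hw (S.aux_exp _ _ hn).symm

end NumerationSystem

/-- For every cylinder set of length `K ≤ j` one has
`μ(Z) ≥ β^{d-1}/(β^j (β^{d-1}+…+1))`; in particular, the quantities
`F_{K,j} - a_0 F_{K,j-1} - … - a_{j-1} F_{K,0}` are nonnegative for `0 ≤ j ≤ d`. -/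
theorem mu_lower_bound_and_F_nonneg
    (S : NumerationSystem) (β : ℝ) (hβ : S.IsCharRoot β) :
    (∀ w K, S.RegularWord w K → ∀ j, j ≤ S.d →
        (∑ i ∈ Finset.range j, (S.a i : ℝ) * (S.F w K (j - 1 - i) : ℝ)) ≤ (S.F w K j : ℝ)) ∧
    (∀ w K j, S.RegularWord w K → K ≤ j →
        β ^ (S.d - 1) / (β ^ j * ∑ i ∈ Finset.range S.d, β ^ i) ≤ S.mu β w K) := by
  have h1 : ∀ w K, ∀ j, j ≤ S.d →
        (∑ i ∈ Finset.range j, (S.a i : ℝ) * (S.F w K (j - 1 - i) : ℝ)) ≤ (S.F w K j : ℝ) := by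
    intro w K j hj
    exact_mod_cast S.aux_F_ge w K j hj
  refine ⟨fun w K _ => h1 w K, ?_⟩
  intro w K j hw hKj
  have hβ1 : 1 < β := hβ.2.2.1
  have hβ0 : 0 < β := by linarith
  have hsum : 0 < ∑ i ∈ Finset.range S.d, β ^ i :=
    Finset.sum_pos (fun i _ => pow_pos hβ0 i) ⟨0, Finset.mem_range.2 S.hd⟩
  unfold NumerationSystem.mu
  have hnum : β ^ (S.d - 1) ≤ ∑ j ∈ Finset.range S.d,
      ((S.F w K j : ℝ) - ∑ i ∈ Finset.range j, (S.a i : ℝ) * (S.F w K (j - 1 - i) : ℝ))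
        * β ^ (S.d - 1 - j) := by
    have h2 := Finset.single_le_sum (s := Finset.range S.d) (f := fun j =>
      ((S.F w K j : ℝ) - ∑ i ∈ Finset.range j, (S.a i : ℝ) * (S.F w K (j - 1 - i) : ℝ))
        * β ^ (S.d - 1 - j)) (fun j hj => mul_nonneg
          (sub_nonneg.2 (h1 w K j (Finset.mem_range.1 hj).le)) (pow_pos hβ0 _).le)
          (Finset.mem_range.2 S.hd)
    refine le_trans ?_ h2
    have h3 : (1 : ℝ) ≤ (S.F w K 0 : ℝ) := by exact_mod_cast S.aux_F_zero w K hw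
    have h4 : 0 < β ^ (S.d - 1) := pow_pos hβ0 _
    simp only [Finset.range_zero, Finset.sum_empty, sub_zero, Nat.sub_zero]
    nlinarith
  have hpow : β ^ K ≤ β ^ j := pow_le_pow_right₀ hβ1.le hKj
  apply div_le_div₀ (le_trans (pow_pos hβ0 _).le hnum) hnum (mul_pos (pow_pos hβ0 _) hsum)
  exact mul_le_mul_of_nonneg_right hpow hsum.le
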